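/- Let S be a finite set of points in the plane in general position and let T = (S,E) ∈ 𝒯(S). Suppose p, q, r ∈ S are such that pq ∈ E and the interior of the triangle Δ(pqr) does not intersect any edge of T. Then at least one of the graphs (S, E ∖ {pq} ∪ {pr}) and (S, E ∖ {pq} ∪ {qr}) is again a noncrossing straight-line spanning tree in 𝒯(S); in particular, an empty-triangle rotation can replace pq with either pr or qr. -/

import Mathlib

open scoped Classical

noncomputable section

/-- Points in the plane. -/
abbrev Pt : Type := ℝ × ℝ

/-- The closed straight-line segment spanned by an (unordered) edge. -/
def segOf (e : Sym2 Pt) : Set Pt :=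
  Sym2.lift ⟨fun p q => segment ℝ p q, fun p q => segment_symm ℝ p q⟩ e

/-- The set of endpoints of an edge. -/
def epts (e : Sym2 Pt) : Set Pt := {p | p ∈ e}

/-- Two edges intersect in at most common endpoints (they do not cross). -/
def NoCrossPair (e f : Sym2 Pt) : Prop := segOf e ∩ segOf f ⊆ epts e ∩ epts f

/-- A set of edges is noncrossing: any two distinct edges meet in at most a common endpoint. -/
def NoCross (E : Finset (Sym2 Pt)) : Prop := ∀ e ∈ E, ∀ f ∈ E, e ≠ f → NoCrossPair e f

/-- `E` is the edge set of a noncrossing straight-line spanning tree on the point set `S`: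
all edges are nondegenerate with endpoints in `S`, pairwise noncrossing, there are
`|S| - 1` of them, and they connect all of `S`. -/
def IsPST (S : Finset Pt) (E : Finset (Sym2 Pt)) : Prop :=
  (∀ e ∈ E, ¬ e.IsDiag ∧ ∀ p ∈ e, p ∈ S) ∧
  NoCross E ∧ E.card + 1 = S.card ∧
  ∀ p ∈ S, ∀ q ∈ S, Relation.ReflTransGen (fun a b => s(a, b) ∈ E) p q

/-- `S` is in general position: no three of its points are collinear. -/
def GenPos (S : Finset Pt) : Prop :=
  ∀ p ∈ S, ∀ q ∈ S, ∀ r ∈ S, p ≠ q → p ≠ r → q ≠ r → ¬ Collinear ℝ ({p, q, r} : Set Pt)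

/-- `S` is in convex position: every point of `S` is a vertex of the convex hull of `S`. -/
def ConvexPos (S : Finset Pt) : Prop :=
  ∀ p ∈ S, p ∉ convexHull ℝ ((S : Set Pt) \ {p})

/-- The open interior of the triangle with vertices `p`, `q`, `r`. -/
def triInt (p q r : Pt) : Set Pt := interior (convexHull ℝ ({p, q, r} : Set Pt))

/-- `y` can be reached from `x` by a sequence of at most `m` `step`-operations. -/
def ReachesIn {α : Type*} (step : α → α → Prop) (m : ℕ) (x y : α) : Prop :=
  ∃ k ≤ m, ∃ f : ℕ → α, f 0 = x ∧ f k = y ∧ ∀ i < k, step (f i) (f (i + 1))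

/-- A simultaneous rotation from `E₁` to `E₂`: a bijection `π` between the removed and the
inserted edges such that each `e` shares an endpoint with `π e` and `π e` crosses no edge
of `E₁`. -/
def SimRotation (S : Finset Pt) (E₁ E₂ : Finset (Sym2 Pt)) : Prop :=
  IsPST S E₁ ∧ IsPST S E₂ ∧ ∃ π : Sym2 Pt → Sym2 Pt,
    Set.BijOn π ↑(E₁ \ E₂) ↑(E₂ \ E₁) ∧
    ∀ e ∈ E₁ \ E₂, (∃ p, p ∈ e ∧ p ∈ π e) ∧ ∀ f ∈ E₁, NoCrossPair (π e) f

/-- An empty-triangle rotation replaces an edge `pq` by an adjacent edge `pr` such that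
no edge of either tree meets the interior of the triangle `pqr`. -/
def EmptyTriRot (S : Finset Pt) (E₁ E₂ : Finset (Sym2 Pt)) : Prop :=
  IsPST S E₁ ∧ IsPST S E₂ ∧ ∃ p q r : Pt,
    E₁ \ E₂ = {s(p, q)} ∧ E₂ \ E₁ = {s(p, r)} ∧
    ∀ g ∈ E₁ ∪ E₂, Disjoint (segOf g) (triInt p q r)

/-- A simultaneous empty-triangle rotation. -/
def SimEmptyTriRot (S : Finset Pt) (E₁ E₂ : Finset (Sym2 Pt)) : Prop :=
  IsPST S E₁ ∧ IsPST S E₂ ∧ ∃ π : Sym2 Pt → Sym2 Pt,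
    Set.BijOn π ↑(E₁ \ E₂) ↑(E₂ \ E₁) ∧
    ∀ e ∈ E₁ \ E₂, ∃ p q r : Pt, e = s(p, q) ∧ π e = s(p, r) ∧
      ∀ g ∈ E₁ ∪ E₂, Disjoint (segOf g) (triInt p q r)

/-- An edge slide replaces `pq` by `pr`, where `qr` is an edge of both trees and no edge of
either tree meets the interior of the triangle `pqr`. -/
def EdgeSlide (S : Finset Pt) (E₁ E₂ : Finset (Sym2 Pt)) : Prop :=
  IsPST S E₁ ∧ IsPST S E₂ ∧ ∃ p q r : Pt,
    E₁ \ E₂ = {s(p, q)} ∧ E₂ \ E₁ = {s(p, r)} ∧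
    s(q, r) ∈ E₁ ∧ s(q, r) ∈ E₂ ∧
    ∀ g ∈ E₁ ∪ E₂, Disjoint (segOf g) (triInt p q r)

/-- A simultaneous edge slide. -/
def SimEdgeSlide (S : Finset Pt) (E₁ E₂ : Finset (Sym2 Pt)) : Prop :=
  IsPST S E₁ ∧ IsPST S E₂ ∧ ∃ π : Sym2 Pt → Sym2 Pt,
    Set.BijOn π ↑(E₁ \ E₂) ↑(E₂ \ E₁) ∧
    ∀ e ∈ E₁ \ E₂, ∃ p q r : Pt, e = s(p, q) ∧ π e = s(p, r) ∧
      s(q, r) ∈ E₁ ∧ s(q, r) ∈ E₂ ∧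
      ∀ g ∈ E₁ ∪ E₂, Disjoint (segOf g) (triInt p q r)

/-- `e` is an edge of the convex hull of `S`: it joins two distinct points of `S` and its
segment lies on the boundary of the convex hull of `S`. -/
def IsHullEdge (S : Finset Pt) (e : Sym2 Pt) : Prop :=
  ∃ u v : Pt, e = s(u, v) ∧ u ∈ S ∧ v ∈ S ∧ u ≠ v ∧
    segment ℝ u v ⊆ frontier (convexHull ℝ (S : Set Pt))

/-- The spanning star centered at `v`. -/
def starAt (S : Finset Pt) (v : Pt) : Finset (Sym2 Pt) := (S.erase v).image (fun w => s(v, w))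

/-- An edge-labeled tree: an edge set together with a labeling function. -/
abbrev LTree := Finset (Sym2 Pt) × (Sym2 Pt → ℕ)

/-- `T` is an edge-labeled noncrossing straight-line spanning tree on `S`: its edge set is in
`𝒯(S)` and its labeling is a bijection from the edges onto `{1, …, |S| - 1}`
(normalized to `0` on non-edges). -/
def IsLabeledPST (S : Finset Pt) (T : LTree) : Prop :=
  IsPST S T.1 ∧ Set.BijOn T.2 ↑T.1 (Set.Icc 1 (S.card - 1)) ∧ ∀ e, e ∉ T.1 → T.2 e = 0

/-- A simultaneous exchange on edge-labeled trees: an arbitrary bijection between removed and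
inserted edges transferring labels, all common edges keeping their labels. -/
def LabSimExchange (S : Finset Pt) (T₁ T₂ : LTree) : Prop :=
  IsLabeledPST S T₁ ∧ IsLabeledPST S T₂ ∧ ∃ π : Sym2 Pt → Sym2 Pt,
    Set.BijOn π ↑(T₁.1 \ T₂.1) ↑(T₂.1 \ T₁.1) ∧
    (∀ e ∈ T₁.1 \ T₂.1, T₂.2 (π e) = T₁.2 e) ∧
    ∀ e ∈ T₁.1 ∩ T₂.1, T₂.2 e = T₁.2 e

/-- A rotation on edge-labeled trees: the removed and inserted edges share an endpoint and do
not cross, the label of the removed edge is transferred, and all other labels are kept. -/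
def LabRotation (S : Finset Pt) (T₁ T₂ : LTree) : Prop :=
  IsLabeledPST S T₁ ∧ IsLabeledPST S T₂ ∧ ∃ e₁ e₂ : Sym2 Pt,
    T₁.1 \ T₂.1 = {e₁} ∧ T₂.1 \ T₁.1 = {e₂} ∧
    (∃ p, p ∈ e₁ ∧ p ∈ e₂) ∧ NoCrossPair e₁ e₂ ∧
    T₂.2 e₂ = T₁.2 e₁ ∧ ∀ e ∈ T₁.1 ∩ T₂.1, T₂.2 e = T₁.2 e

/-- An edge slide on edge-labeled trees, transferring the label of the slid edge. -/
def LabEdgeSlide (S : Finset Pt) (T₁ T₂ : LTree) : Prop :=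
  IsLabeledPST S T₁ ∧ IsLabeledPST S T₂ ∧ ∃ p q r : Pt,
    T₁.1 \ T₂.1 = {s(p, q)} ∧ T₂.1 \ T₁.1 = {s(p, r)} ∧
    s(q, r) ∈ T₁.1 ∧ s(q, r) ∈ T₂.1 ∧
    (∀ g ∈ T₁.1 ∪ T₂.1, Disjoint (segOf g) (triInt p q r)) ∧
    T₂.2 (s(p, r)) = T₁.2 (s(p, q)) ∧ ∀ e ∈ T₁.1 ∩ T₂.1, T₂.2 e = T₁.2 e

/-!
Removing `pq` splits the tree into the component of `p` and that of `q`, and `r` lies in one of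
them. If it is the component of `p`, then `qr` reconnects the two parts (and symmetrically `pr`
does). The new edge is not crossed: an edge crossing the relative interior of the side `qr` either
lies on the line `qr`, hence equals `qr` by general position, or has an endpoint strictly on the
side of `p`, so that it enters the interior of the triangle right after crossing `qr`.
-/

section Simplex

open Topology

variable {ι V : Type*} [Finite ι] [NormedAddCommGroup V] [NormedSpace ℝ V] (b : AffineBasis ι ℝ V)
  {i : ι} {x y z : V}

lemma exists_mem_segment_mem_interior_convexHull (hxi : 0 ≤ b.coord i x)
    (hx : ∀ j ≠ i, 0 < b.coord j x) (hy : 0 < b.coord i y) :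
    ∃ w ∈ segment ℝ x y, w ∈ interior (convexHull ℝ (Set.range b)) := by
  simp only [b.interior_convexHull, segment_eq_image_lineMap, Set.exists_mem_image]
  suffices h : ∀ᶠ t : ℝ in 𝓝[>] 0,
      t ∈ Set.Ioo 0 1 ∧ ∀ j, 0 < b.coord j (AffineMap.lineMap x y t) from
    h.exists.imp fun t ht => ⟨Set.Ioo_subset_Icc_self ht.1, ht.2⟩
  have hIoo : ∀ᶠ t : ℝ in 𝓝[>] 0, t ∈ Set.Ioo 0 1 := Ioo_mem_nhdsGT one_pos
  refine hIoo.and (Filter.eventually_all.2 fun j => ?_)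
  simp only [AffineMap.apply_lineMap]
  obtain rfl | hj := eq_or_ne j i
  · filter_upwards [hIoo] with t ht
    rw [AffineMap.lineMap_apply_ring]
    nlinarith [mul_pos ht.1 hy, ht.2]
  · have hcont : Continuous fun t : ℝ => AffineMap.lineMap (b.coord j x) (b.coord j y) t :=
      AffineMap.lineMap_continuous
    refine nhdsWithin_le_nhds (hcont.continuousAt.eventually_const_lt ?_)
    simpa using hx j hj

lemma coord_eq_zero_of_mem_openSegment (hxi : b.coord i x = 0)
    (hx : ∀ j ≠ i, 0 < b.coord j x) (hxyz : x ∈ openSegment ℝ y z)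
    (hdisj : Disjoint (segment ℝ y z) (interior (convexHull ℝ (Set.range b)))) :
    b.coord i y = 0 := by
  have hnonpos : ∀ w ∈ segment ℝ y z, b.coord i w ≤ 0 := fun w hw => by
    by_contra! hpos
    obtain ⟨v, hv, hv'⟩ := exists_mem_segment_mem_interior_convexHull b hxi.ge hx hpos
    have hsub := (convex_segment y z).segment_subset (openSegment_subset_segment ℝ y z hxyz) hw
    exact Set.disjoint_left.1 hdisj (hsub hv) hv'
  obtain ⟨α, β, hα, hβ, hαβ, rfl⟩ := hxyz
  rw [Convex.combo_affine_apply hαβ, smul_eq_mul, smul_eq_mul] at hxi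
  have hy := hnonpos y (left_mem_segment ℝ y z)
  have hz := hnonpos z (right_mem_segment ℝ y z)
  nlinarith

end Simplex

section Triangle

lemma exists_affineBasis_of_not_collinear {k V P : Type*} [DivisionRing k] [AddCommGroup V]
    [Module k V] [AddTorsor V P] (hV : Module.finrank k V = 2) {p q r : P}
    (hpqr : ¬ Collinear k {p, q, r}) : ∃ b : AffineBasis (Fin 3) k P, ⇑b = ![p, q, r] := by
  have : FiniteDimensional k V := .of_finrank_pos (by omega)
  have hind := affineIndependent_iff_not_collinear_set.2 hpqr
  exact ⟨⟨_, hind, hind.affineSpan_eq_top_iff_card_eq_finrank_add_one.2 (by simp [hV])⟩, rfl⟩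

lemma collinear_of_coord_zero_eq_zero {k V : Type*} [DivisionRing k] [AddCommGroup V] [Module k V]
    (b : AffineBasis (Fin 3) k V) {x : V} (hx : b.coord 0 x = 0) :
    Collinear k {x, b 1, b 2} := by
  have hsum := b.sum_coord_apply_eq_one x
  have hcomb := b.linear_combination_coord_eq_self x
  rw [Fin.sum_univ_three, hx, zero_add] at hsum
  rw [Fin.sum_univ_three, hx, zero_smul, zero_add] at hcomb
  apply collinear_insert_of_mem_affineSpan_pair
  rw [← hcomb, eq_sub_iff_add_eq.2 hsum, ← AffineMap.lineMap_apply_module]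
  exact AffineMap.lineMap_mem_affineSpan_pair _ _ _

variable {V : Type*} [NormedAddCommGroup V] [NormedSpace ℝ V] {p q r x y z : V}

lemma collinear_of_mem_openSegment_of_disjoint_interior (hV : Module.finrank ℝ V = 2)
    (hpqr : ¬ Collinear ℝ {p, q, r}) (hx : x ∈ openSegment ℝ q r) (hx' : x ∈ openSegment ℝ y z)
    (hdisj : Disjoint (segment ℝ y z) (interior (convexHull ℝ {p, q, r}))) :
    Collinear ℝ {y, q, r} := by
  obtain ⟨b, hb⟩ := exists_affineBasis_of_not_collinear hV hpqr
  obtain ⟨rfl, rfl, rfl⟩ : p = b 0 ∧ q = b 1 ∧ r = b 2 := by simp [hb]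
  have hrange : Set.range b = {b 0, b 1, b 2} := by
    ext; simp [Fin.exists_fin_succ, eq_comm]
  rw [← hrange] at hdisj
  have hcoord : b.coord 0 x = 0 ∧ 0 < b.coord 1 x ∧ 0 < b.coord 2 x := by
    obtain ⟨α, β, hα, hβ, hαβ, rfl⟩ := hx
    simp [Convex.combo_affine_apply hαβ, b.coord_apply, hα, hβ]
  refine collinear_of_coord_zero_eq_zero b
    (coord_eq_zero_of_mem_openSegment b hcoord.1 (fun j hj => ?_) hx' hdisj)
  fin_cases j
  exacts [absurd rfl hj, hcoord.2.1, hcoord.2.2]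

end Triangle

section Reachability

open SimpleGraph

variable {V : Type*} {G H : SimpleGraph V} {u v w : V}

lemma reachable_deleteEdges_or_of_reachable (h : G.Reachable u w) :
    (G.deleteEdges {s(u, v)}).Reachable u w ∨ (G.deleteEdges {s(u, v)}).Reachable v w := by
  rw [reachable_iff_reflTransGen] at h
  induction h with
  | refl => exact .inl .rfl
  | @tail x y _ hxy ih =>
    by_cases he : s(x, y) = s(u, v)
    · rcases Sym2.eq_iff.1 he with ⟨-, rfl⟩ | ⟨-, rfl⟩
      exacts [.inr .rfl, .inl .rfl]
    · have hadj : (G.deleteEdges {s(u, v)}).Adj x y := deleteEdges_adj.2 ⟨hxy, he⟩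
      exact ih.imp (·.trans hadj.reachable) (·.trans hadj.reachable)

lemma reachable_le_reachable_of_deleteEdges_le (hle : G.deleteEdges {s(u, v)} ≤ H)
    (huv : H.Reachable u v) : G.Reachable ≤ H.Reachable := by
  rw [reachable_eq_reflTransGen (G := G)]
  refine Relation.reflTransGen_le_of_equivalence_of_le H.reachable_is_equivalence fun x y hxy => ?_
  by_cases he : s(x, y) = s(u, v)
  · rcases Sym2.eq_iff.1 he with ⟨rfl, rfl⟩ | ⟨rfl, rfl⟩
    exacts [huv, huv.symm]
  · exact (hle (deleteEdges_adj.2 ⟨hxy, he⟩)).reachable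

lemma card_le_card_add_one_of_reachable {S : Finset V} {E : Finset (Sym2 V)}
    (hES : ∀ e ∈ E, ∀ x ∈ e, x ∈ S)
    (hreach : ∀ x ∈ S, ∀ y ∈ S, (fromEdgeSet (E : Set (Sym2 V))).Reachable x y) :
    S.card ≤ E.card + 1 := by
  obtain rfl | ⟨v, hv⟩ := S.eq_empty_or_nonempty
  · simp
  set G := fromEdgeSet (E : Set (Sym2 V))
  have hsub : G.edgeSet ⊆ E := by simp [G]
  have hconn : (G.induce (S : Set V)).Connected := by
    rw [connected_iff_exists_forall_reachable]
    refine ⟨⟨v, hv⟩, fun ⟨x, hx⟩ => ?_⟩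
    obtain ⟨walk⟩ := hreach v hv x hx
    refine ⟨walk.induce S fun y hy => ?_⟩
    obtain rfl | ⟨e, he, hye⟩ := Walk.mem_support_iff_exists_mem_edges.1 hy
    exacts [hx, hES e (hsub (walk.edges_subset_edgeSet he)) y hye]
  calc S.card = Nat.card (S : Set V) := by simp
    _ ≤ Nat.card (G.induce (S : Set V)).edgeSet + 1 := hconn.card_vert_le_card_edgeSet_add_one
    _ ≤ Nat.card (E : Set (Sym2 V)) + 1 := by
      gcongr
      exact Nat.card_le_card_of_injective _
        ((Set.inclusion_injective hsub).comp (Embedding.induce (S : Set V)).mapEdgeSet.injective)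
    _ = E.card + 1 := by simp

end Reachability

section NonCrossing

lemma NoCrossPair.symm {e f : Sym2 Pt} (h : NoCrossPair e f) : NoCrossPair f e := by
  simpa only [NoCrossPair, Set.inter_comm] using h

lemma NoCross.mono {E F : Finset (Sym2 Pt)} (hF : NoCross F) (hEF : E ⊆ F) : NoCross E :=
  fun e he f hf => hF e (hEF he) f (hEF hf)

lemma NoCross.insert {E : Finset (Sym2 Pt)} {e : Sym2 Pt} (hE : NoCross E)
    (he : ∀ f ∈ E, f ≠ e → NoCrossPair e f) : NoCross (insert e E) := by
  have : Std.Symm NoCrossPair := ⟨fun _ _ => NoCrossPair.symm⟩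
  have hpair : (E : Set (Sym2 Pt)).Pairwise NoCrossPair := fun e he f hf => hE e he f hf
  intro f hf g hg
  rw [← Finset.mem_coe, Finset.coe_insert] at hf hg
  exact hpair.insert_of_symm (fun f hf hne => he f hf hne.symm) hf hg

variable {S : Finset Pt} {p q r a b x : Pt}

lemma GenPos.eq_or_eq_of_collinear (hS : GenPos S) (hx : x ∈ S) (ha : a ∈ S) (hb : b ∈ S)
    (hab : a ≠ b) (hcol : Collinear ℝ {x, a, b}) : x = a ∨ x = b := by
  by_contra! hne
  exact hS x hx a ha b hb hne.1 hne.2 hab hcol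

lemma GenPos.eq_or_eq_of_mem_segment (hS : GenPos S) (hx : x ∈ S) (ha : a ∈ S) (hb : b ∈ S)
    (hxab : x ∈ segment ℝ a b) : x = a ∨ x = b := by
  obtain rfl | hab := eq_or_ne a b
  · simpa using hxab
  · rw [mem_segment_iff_wbtw] at hxab
    exact hS.eq_or_eq_of_collinear hx ha hb hab (Set.insert_comm a x {b} ▸ hxab.collinear)

lemma GenPos.noCrossPair_of_disjoint_triInt (hS : GenPos S) (hpqr : ¬ Collinear ℝ {p, q, r})
    (hq : q ∈ S) (hr : r ∈ S) (ha : a ∈ S) (hb : b ∈ S) (hne : s(a, b) ≠ s(q, r))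
    (hdisj : Disjoint (segOf s(a, b)) (triInt p q r)) : NoCrossPair s(q, r) s(a, b) := by
  rintro x ⟨hxqr : x ∈ segment ℝ q r, hxab : x ∈ segment ℝ a b⟩
  change x ∈ s(q, r) ∧ x ∈ s(a, b)
  rw [Sym2.mem_iff, Sym2.mem_iff]
  by_cases hx : x ∈ S
  · exact ⟨hS.eq_or_eq_of_mem_segment hx hq hr hxqr, hS.eq_or_eq_of_mem_segment hx ha hb hxab⟩
  have hne_x : ∀ {y}, y ∈ S → y ≠ x := fun hy h => hx (h ▸ hy)
  have hx_open {c d} (hc : c ∈ S) (hd : d ∈ S) (h : x ∈ segment ℝ c d) : x ∈ openSegment ℝ c d :=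
    mem_openSegment_of_ne_left_right (hne_x hc) (hne_x hd) h
  have hqr : q ≠ r := fun h => hpqr (by simpa [h] using collinear_pair ℝ p r)
  have hab : a ≠ b := fun h => hne_x hb (by simpa [h, eq_comm] using hxab)
  have hline {c d} (hc : c ∈ S) (hd : d ∈ S) (h : x ∈ segment ℝ c d)
      (hcd : Disjoint (segment ℝ c d) (triInt p q r)) : c = q ∨ c = r :=
    hS.eq_or_eq_of_collinear hc hq hr hqr <| collinear_of_mem_openSegment_of_disjoint_interior
      (by simp) hpqr (hx_open hq hr hxqr) (hx_open hc hd h) hcd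
  have ha' := hline ha hb hxab hdisj
  have hb' := hline hb ha (segment_symm ℝ a b ▸ hxab) (segment_symm ℝ a b ▸ hdisj)
  exact absurd (by grind : s(a, b) = s(q, r)) hne

end NonCrossing

section SpanningTree

open SimpleGraph

variable {S : Finset Pt} {E : Finset (Sym2 Pt)} {p q r : Pt}

lemma isPST_iff_reachable : IsPST S E ↔
    (∀ e ∈ E, ¬ e.IsDiag ∧ ∀ p ∈ e, p ∈ S) ∧ NoCross E ∧ E.card + 1 = S.card ∧
      ∀ p ∈ S, ∀ q ∈ S, (fromEdgeSet (E : Set (Sym2 Pt))).Reachable p q := by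
  rw [reachable_fromEdgeSet_eq_reflTransGen_toRel]
  rfl

lemma IsPST.insert_erase (hT : IsPST S E) (hpq : s(p, q) ∈ E) (hr : r ∈ S) (hqr : q ≠ r)
    (hpr : ((fromEdgeSet (E : Set (Sym2 Pt))).deleteEdges {s(p, q)}).Reachable p r)
    (hnc : ∀ f ∈ E, f ≠ s(q, r) → NoCrossPair s(q, r) f) :
    IsPST S (insert s(q, r) (E.erase s(p, q))) := by
  rw [isPST_iff_reachable] at hT ⊢
  obtain ⟨hES, hE, hcard, hreach⟩ := hT
  set F := insert s(q, r) (E.erase s(p, q)) with hF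
  have hFS : ∀ e ∈ F, ¬ e.IsDiag ∧ ∀ x ∈ e, x ∈ S := by
    refine Finset.forall_mem_insert .. |>.2 ⟨⟨by simpa using hqr, ?_⟩, fun e he =>
      hES e (Finset.mem_of_mem_erase he)⟩
    simpa using ⟨(hES _ hpq).2 q (by simp), hr⟩
  have hle : (fromEdgeSet (E : Set (Sym2 Pt))).deleteEdges {s(p, q)} ≤ fromEdgeSet F := by
    rw [deleteEdges_fromEdgeSet, ← Finset.coe_erase]
    exact fromEdgeSet_mono (Finset.coe_subset.2 (Finset.subset_insert _ _))
  have hqr_adj : (fromEdgeSet (F : Set (Sym2 Pt))).Adj q r := by simp [hF, hqr]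
  have hFreach : ∀ x ∈ S, ∀ y ∈ S, (fromEdgeSet (F : Set (Sym2 Pt))).Reachable x y :=
    fun x hx y hy => reachable_le_reachable_of_deleteEdges_le hle
      ((hpr.mono hle).trans hqr_adj.reachable.symm) x y (hreach x hx y hy)
  refine ⟨hFS, (hE.mono (Finset.erase_subset _ _)).insert fun f hf =>
    hnc f (Finset.mem_of_mem_erase hf), ?_, hFreach⟩
  -- `qr` is a new edge: otherwise `F` would connect `S` with only `|S| - 2` edges.
  have hlower := card_le_card_add_one_of_reachable (fun e he => (hFS e he).2) hFreach
  have hupper : F.card ≤ (E.erase s(p, q)).card + 1 := Finset.card_insert_le _ _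
  have herase := Finset.card_erase_add_one hpq
  omega

lemma IsPST.insert_erase_of_disjoint_triInt (hS : GenPos S) (hT : IsPST S E)
    (hpq : s(p, q) ∈ E) (hr : r ∈ S) (hpqr : ¬ Collinear ℝ {p, q, r})
    (hempty : ∀ f ∈ E, Disjoint (segOf f) (triInt p q r))
    (hpr : ((fromEdgeSet (E : Set (Sym2 Pt))).deleteEdges {s(p, q)}).Reachable p r) :
    IsPST S (insert s(q, r) (E.erase s(p, q))) := by
  have hqr : q ≠ r := fun h => hpqr (by simpa [h] using collinear_pair ℝ p r)
  refine hT.insert_erase hpq hr hqr hpr fun f hf hne => ?_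
  induction f with
  | h a b =>
    exact hS.noCrossPair_of_disjoint_triInt hpqr ((hT.1 _ hpq).2 q (by simp)) hr
      ((hT.1 _ hf).2 a (by simp)) ((hT.1 _ hf).2 b (by simp)) hne (hempty _ hf)

end SpanningTree

/-- if `pq ∈ E` and the interior of the triangle `pqr` misses all edges of the
tree, then replacing `pq` by `pr` or by `qr` again yields a noncrossing spanning tree. -/
theorem stmt_2 (S : Finset Pt) (hgen : GenPos S) (E : Finset (Sym2 Pt)) (hT : IsPST S E)
    (p q r : Pt) (hp : p ∈ S) (hq : q ∈ S) (hr : r ∈ S)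
    (hpq : s(p, q) ∈ E)
    (hempty : ∀ f ∈ E, Disjoint (segOf f) (triInt p q r)) :
    IsPST S (insert (s(p, r)) (E.erase (s(p, q)))) ∨
    IsPST S (insert (s(q, r)) (E.erase (s(p, q)))) := by
  obtain rfl | hpr := eq_or_ne p r
  · exact .inr (by rwa [Sym2.eq_swap (a := q), Finset.insert_erase hpq])
  obtain rfl | hqr := eq_or_ne q r
  · exact .inl (by rwa [Finset.insert_erase hpq])
  have hne : p ≠ q := by simpa using (hT.1 _ hpq).1
  have hpqr : ¬ Collinear ℝ {p, q, r} := hgen p hp q hq r hr hne hpr hqr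
  have hreach := (isPST_iff_reachable.1 hT).2.2.2 p hp r hr
  rcases reachable_deleteEdges_or_of_reachable (v := q) hreach with h | h
  · exact .inr (hT.insert_erase_of_disjoint_triInt hgen hpq hr hpqr hempty h)
  · left
    rw [triInt, Set.insert_comm, ← triInt] at hempty
    rw [Set.insert_comm] at hpqr
    rw [Sym2.eq_swap (a := p) (b := q)] at hpq h ⊢
    exact hT.insert_erase_of_disjoint_triInt hgen hpq hr hpqr hempty h
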